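/- arXiv:1002.3569 — 2 statements merged into one kernel-verified Lean document; each statement's English description precedes it below -/
import Mathlib

section
/- Let p be a prime, G a group, and N a normal subgroup of G of index p. Fix i ∈ ℕ. If the group cohomology H^i(G, 𝔽_p) (with G acting trivially on 𝔽_p) is finite-dimensional as an 𝔽_p-vector space, then H^i(N, 𝔽_p) (with N acting trivially on 𝔽_p) is finite-dimensional and dim_{𝔽_p} H^i(N, 𝔽_p) ≤ p · dim_{𝔽_p} H^i(G, 𝔽_p). -/
/-!
By Shapiro's lemma `Hⁱ(N, 𝔽_p) ≅ Hⁱ(G, C)`, where `C` is the representation of `G` coinduced from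
the trivial representation `𝔽_p` of `N`. Because `N` is normal of index `p`, it acts trivially
on `C` and `dim C ≤ p`.

So it is enough to bound `Hⁱ(G, A)` by `dim A · dim Hⁱ(G, 𝔽_p)` for every finite-dimensional `A`
on which `N` acts trivially (`finrank_groupCohomology_le`). Such an `A` is a representation of the
`p`-group `G ⧸ N` in characteristic `p`, so if `A ≠ 0` it contains a nonzero fixed vector `v`
(`exists_fixed_vector`). The sequence `0 ⟶ 𝔽_p ⟶ A ⟶ A ⧸ 𝔽_p v ⟶ 0` is then exact, and the bound
follows by induction on `dim A` from the exactness of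
`Hⁱ(G, 𝔽_p) ⟶ Hⁱ(G, A) ⟶ Hⁱ(G, A ⧸ 𝔽_p v)`.
-/

open CategoryTheory

lemma finrank_le_of_range_eq_ker {k U V W : Type*} [Field k]
    [AddCommGroup U] [Module k U] [AddCommGroup V] [Module k V] [AddCommGroup W] [Module k W]
    [FiniteDimensional k U] [FiniteDimensional k W]
    (f : U →ₗ[k] V) (g : V →ₗ[k] W) (h : LinearMap.range f = LinearMap.ker g) :
    FiniteDimensional k V ∧
      Module.finrank k V ≤ Module.finrank k U + Module.finrank k W := by
  have hV : FiniteDimensional k V :=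
    IsNoetherian.iff_fg.1 (isNoetherian_of_range_eq_ker f g h)
  refine ⟨hV, ?_⟩
  have h1 := g.finrank_range_add_finrank_ker
  have h2 := f.finrank_range_le
  have h3 := (LinearMap.range g).finrank_le
  rw [h] at h2
  omega

/-- A `p`-group acting linearly on a nonzero finite-dimensional `𝔽_p`-vector space fixes a nonzero
vector: the number of fixed vectors is positive and divisible by `p`. -/
lemma exists_fixed_vector {p : ℕ} [Fact p.Prime] {G : Type} [Group G] (N : Subgroup G) [N.Normal]
    (hp : IsPGroup p (G ⧸ N)) {V : Type} [AddCommGroup V] [Module (ZMod p) V]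
    [FiniteDimensional (ZMod p) V] (hV : 0 < Module.finrank (ZMod p) V)
    (ρ : Representation (ZMod p) G V) (hρ : ∀ n ∈ N, ρ n = 1) :
    ∃ v : V, v ≠ 0 ∧ ∀ g, ρ g v = v := by
  have : Representation.IsTrivial (ρ.comp N.subtype) :=
    ⟨fun n => by ext x; simp [hρ n.1 n.2]⟩
  let _ : MulAction (G ⧸ N) V := MulAction.compHom V (ρ.ofQuotient N)
  have hsmul (g : G) (v : V) : (g : G ⧸ N) • v = ρ g v := rfl
  have : Finite V := Module.finite_of_finite (ZMod p)
  have hdvd : p ∣ Nat.card V := by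
    rw [Module.natCard_eq_pow_finrank (K := ZMod p), Nat.card_zmod]
    exact dvd_pow_self p hV.ne'
  have h0 : (0 : V) ∈ MulAction.fixedPoints (G ⧸ N) V := fun q => by
    obtain ⟨g, rfl⟩ := QuotientGroup.mk_surjective q
    rw [hsmul, map_zero]
  obtain ⟨v, hv, hne⟩ := hp.exists_fixed_point_of_prime_dvd_card_of_fixed_point V hdvd h0
  exact ⟨v, hne.symm, fun g => (hsmul g v).symm.trans (hv g)⟩

/-- The short complex `k ⟶ A ⟶ A ⧸ k v` of representations attached to a fixed vector `v`. -/
noncomputable def fixedVectorComplex {k G : Type} [Field k] [Group G] (A : Rep.{0} k G) (v : A)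
    (hv : ∀ g, A.ρ g v = v) : ShortComplex (Rep.{0} k G) where
  X₁ := Rep.trivial k G k
  X₂ := A
  X₃ := A.quotient (k ∙ v) fun g => by
    rw [Submodule.span_singleton_le_iff_mem, Submodule.mem_comap, hv]
    exact Submodule.mem_span_singleton_self v
  f := Rep.ofHom ⟨LinearMap.toSpanSingleton k A v, fun g => by ext; simp [hv]⟩
  g := A.mkQ _ _
  zero := by
    ext
    exact (Submodule.Quotient.mk_eq_zero _).2
      (Submodule.smul_mem _ _ (Submodule.mem_span_singleton_self v))

lemma fixedVectorComplex_shortExact {k G : Type} [Field k] [Group G] (A : Rep.{0} k G) (v : A)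
    (hv : ∀ g, A.ρ g v = v) (hv0 : v ≠ 0) : (fixedVectorComplex A v hv).ShortExact where
  exact := (forget₂ (Rep.{0} k G) (ModuleCat k)).reflects_exact_of_faithful _ <|
    (ShortComplex.moduleCat_exact_iff _).2 fun x hx => by
      obtain ⟨c, hc⟩ := Submodule.mem_span_singleton.1 ((Submodule.Quotient.mk_eq_zero _).1 hx)
      exact ⟨c, hc⟩
  mono_f := (Rep.mono_iff_injective _).2 (smul_left_injective k hv0)
  epi_g := (Rep.epi_iff_surjective _).2 (Submodule.mkQ_surjective _)

/-- Dévissage along fixed vectors, by induction on `dim A`. -/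
lemma finrank_groupCohomology_le {p : ℕ} [Fact p.Prime] {G : Type} [Group G] (N : Subgroup G)
    [N.Normal] (hp : IsPGroup p (G ⧸ N)) (i : ℕ)
    (hfin : FiniteDimensional (ZMod p)
      (groupCohomology (Rep.trivial (ZMod p) G (ZMod p)) i)) (n : ℕ) :
    ∀ (A : Rep.{0} (ZMod p) G), FiniteDimensional (ZMod p) A → Module.finrank (ZMod p) A = n →
      (∀ g ∈ N, A.ρ g = 1) →
      FiniteDimensional (ZMod p) (groupCohomology A i) ∧
        Module.finrank (ZMod p) (groupCohomology A i) ≤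
          n * Module.finrank (ZMod p)
            (groupCohomology (Rep.trivial (ZMod p) G (ZMod p)) i) := by
  induction n with
  | zero =>
    intro A _ hA _
    have hz : Limits.IsZero (groupCohomology A i) :=
      (groupCohomology.functor (ZMod p) G i).map_isZero
        ((Rep.isZero_iff _ _ A).2 (Module.finrank_zero_iff.1 hA))
    have : Subsingleton (groupCohomology A i) := ModuleCat.subsingleton_of_isZero hz
    exact ⟨inferInstance, by simp [Module.finrank_zero_of_subsingleton]⟩
  | succ n ih =>
    intro A _ hA hN
    obtain ⟨v, hv0, hv⟩ := exists_fixed_vector N hp (by omega) A.ρ hN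
    have hX := fixedVectorComplex_shortExact A v hv hv0
    have hQ : Module.finrank (ZMod p) (A ⧸ (ZMod p ∙ v)) = n := by
      have h1 := (ZMod p ∙ v).finrank_quotient_add_finrank
      rw [finrank_span_singleton hv0] at h1
      omega
    obtain ⟨hf, hle⟩ := ih (fixedVectorComplex A v hv).X₃
      (inferInstanceAs (FiniteDimensional (ZMod p) (A ⧸ (ZMod p ∙ v)))) hQ fun g hg => by
        refine LinearMap.ext fun x => ?_
        obtain ⟨a, rfl⟩ := Submodule.mkQ_surjective (ZMod p ∙ v) x
        exact congrArg (Submodule.mkQ (ZMod p ∙ v)) (by rw [hN g hg]; rfl)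
    have hex := (groupCohomology.mapShortComplex₂_exact hX i).moduleCat_range_eq_ker
    have : FiniteDimensional (ZMod p)
      ((fixedVectorComplex A v hv).map (groupCohomology.functor (ZMod p) G i)).X₁ := hfin
    have : FiniteDimensional (ZMod p)
      ((fixedVectorComplex A v hv).map (groupCohomology.functor (ZMod p) G i)).X₃ := hf
    obtain ⟨h1, h2⟩ := finrank_le_of_range_eq_ker _ _ hex
    refine ⟨h1, h2.trans ?_⟩
    rw [add_mul, one_mul, add_comm]
    exact Nat.add_le_add_right hle _

/-- A function in the coinduced module is determined by its values on coset representatives. -/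
lemma coind_trivial_finrank_le {k G : Type} [Field k] [Group G] (N : Subgroup G) [N.Normal]
    [Finite (G ⧸ N)] :
    FiniteDimensional k (Rep.coind N.subtype (Rep.trivial k N k)) ∧
      Module.finrank k (Rep.coind N.subtype (Rep.trivial k N k)) ≤ N.index := by
  have := Fintype.ofFinite (G ⧸ N)
  let φ : Rep.coind N.subtype (Rep.trivial k N k) →ₗ[k] (G ⧸ N → k) :=
    (LinearMap.funLeft k k (Quotient.out : G ⧸ N → G)) ∘ₗ Submodule.subtype _
  have hφ : Function.Injective φ := by
    rintro ⟨f, hf⟩ ⟨f', hf'⟩ h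
    refine Subtype.ext (funext fun g => ?_)
    have hmem : g * (Quotient.out (g : G ⧸ N))⁻¹ ∈ N := by
      have h1 : (Quotient.out (g : G ⧸ N))⁻¹ * g ∈ N :=
        QuotientGroup.eq.1 (QuotientGroup.out_eq' (g : G ⧸ N))
      exact Subgroup.Normal.mem_comm inferInstance h1
    have e := hf ⟨_, hmem⟩ (Quotient.out (g : G ⧸ N))
    have e' := hf' ⟨_, hmem⟩ (Quotient.out (g : G ⧸ N))
    simp only [Subgroup.subtype_apply, inv_mul_cancel_right] at e e'
    exact e.trans ((congrFun h (g : G ⧸ N)).trans e'.symm)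
  refine ⟨Module.Finite.of_injective φ hφ, (LinearMap.finrank_le_finrank_of_injective hφ).trans ?_⟩
  rw [Module.finrank_fintype_fun_eq_card, Subgroup.index, Nat.card_eq_fintype_card]

lemma coind_trivial_apply_of_mem {k G : Type} [Field k] [Group G] (N : Subgroup G) [N.Normal]
    (n : G) (hn : n ∈ N) : (Rep.coind N.subtype (Rep.trivial k N k)).ρ n = 1 := by
  refine LinearMap.ext fun f => Subtype.ext (funext fun g => ?_)
  -- `f (g n) = f ((g n g⁻¹) g) = f g`, as `g n g⁻¹ ∈ N` and `f` is invariant under `N` on the left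
  have e := f.2 ⟨g * n * g⁻¹, Subgroup.Normal.conj_mem inferInstance n hn g⟩ g
  simp only [Subgroup.subtype_apply, inv_mul_cancel_right] at e
  exact e

/-- Lemma 2.1 of the paper. If `N` is a normal subgroup of index `p`
in `G`, and `H^i(G, 𝔽_p)` (trivial action) is finite-dimensional, then `H^i(N, 𝔽_p)` is
finite-dimensional of dimension at most `p` times that of `H^i(G, 𝔽_p)`. -/
theorem stmt0 (p : ℕ) [Fact p.Prime] (G : Type) [Group G] (N : Subgroup G) [N.Normal]
    (hindex : N.index = p) (i : ℕ)
    (hfin : FiniteDimensional (ZMod p)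
      (groupCohomology (Rep.trivial (ZMod p) G (ZMod p)) i)) :
    FiniteDimensional (ZMod p)
        (groupCohomology (Rep.trivial (ZMod p) N (ZMod p)) i) ∧
      Module.finrank (ZMod p) (groupCohomology (Rep.trivial (ZMod p) N (ZMod p)) i) ≤
        p * Module.finrank (ZMod p) (groupCohomology (Rep.trivial (ZMod p) G (ZMod p)) i) := by
  have hcard : Nat.card (G ⧸ N) = p := hindex
  have : Finite (G ⧸ N) :=
    Nat.finite_of_card_ne_zero (hcard ▸ (Fact.out : p.Prime).ne_zero)
  have hp : IsPGroup p (G ⧸ N) := IsPGroup.of_card (n := 1) (by rw [hcard, pow_one])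
  obtain ⟨hC, hCle⟩ := coind_trivial_finrank_le (k := ZMod p) N
  obtain ⟨h1, h2⟩ := finrank_groupCohomology_le N hp i hfin _ _ hC rfl
    (coind_trivial_apply_of_mem N)
  let e := (groupCohomology.coindIso (Rep.trivial (ZMod p) N (ZMod p)) i).toLinearEquiv
  refine ⟨Module.Finite.equiv e, ?_⟩
  rw [← e.finrank_eq]
  exact h2.trans (Nat.mul_le_mul_right _ (hCle.trans hindex.le))
end

section
/- Let p be a prime, Γ a finitely generated group, and L a finitely generated free ℤ_p-module equipped with a ℤ_p-linear action of Γ. Give ℚ_p ⊗_{ℤ_p} L and L/pL the induced Γ-actions. Then dim_{ℚ_p} H^1(Γ, ℚ_p ⊗_{ℤ_p} L) ≤ dim_{𝔽_p} H^1(Γ, L/pL). -/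
/-!
Over a field, `H¹ = Z¹ / B¹` and `B¹ ≃ V / V^Γ`, so `dim H¹ = dim Z¹ - dim V + dim V^Γ`
(`finrank_H1_add`). The middle term is the rank of `L` for both coefficient fields, so it is
enough to compare the dimensions of `Z¹` and of `V^Γ`.

For each of these, let `N` be the corresponding `ℤ_p`-module for `L` itself, namely `Z¹(Γ, L)` or
`L^Γ`. It is free of finite rank, because `L` is and because a cocycle is determined by its values
on a finite generating set of `Γ`. Clearing denominators on these generators shows that `N` spans
the module for `ℚ_p ⊗ L`. On the other hand `pN` is the kernel of the map from `N` to the module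
for `𝔽_p ⊗ L`: a cocycle with values in `pL` is `p` times a cocycle, since `L` is torsion-free.
Hence the rank of `N` bounds the first dimension from above and the second from below
(`finrank_le_of_lattice`). The argument only uses that `ℤ_p` is a principal ideal domain with a
nonzero element generating the kernel of the reduction map.
-/


open TensorProduct

/-- `ℤ/pℤ` as an algebra over the `p`-adic integers, via the canonical reduction map. -/
noncomputable instance zmodAlgebraOfPadicInt (p : ℕ) [Fact p.Prime] :
    Algebra ℤ_[p] (ZMod p) :=
  (PadicInt.toZMod (p := p)).toAlgebra

/-- The base change of a representation `ρ` of `Γ` on the `R`-module `M` along a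
commutative ring map `R → A`: `Γ` acts on `A ⊗[R] M` through the second factor. -/
noncomputable def repBaseChange {R A : Type} [CommRing R] [CommRing A] [Algebra R A]
    {Γ : Type} [Group Γ] {M : Type} [AddCommGroup M] [Module R M]
    (ρ : Representation R Γ M) : Representation A Γ (A ⊗[R] M) :=
  (Module.End.baseChangeHom (R := R) (A := A) (M := M)).toMonoidHom.comp ρ

/-- The `R`-module `Z¹(Γ, M)` of inhomogeneous 1-cocycles of `ρ`, that is, maps `f : Γ → M` with
`f (g * h) = ρ g (f h) + f g`. Unlike `groupCohomology.cocycles₁` it is stated for an unbundled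
representation. -/
def crossedHoms {R Γ M : Type} [CommRing R] [Group Γ] [AddCommGroup M] [Module R M]
    (ρ : Representation R Γ M) : Submodule R (Γ → M) where
  carrier := {f | ∀ g h, f (g * h) = ρ g (f h) + f g}
  add_mem' := by
    intro a b ha hb g h
    simp only [Pi.add_apply, ha g h, hb g h, map_add]
    abel
  zero_mem' := by intro g h; simp
  smul_mem' := by
    intro c f hf g h
    simp [hf g h]

/-- A 1-cocycle with values on a generating set in a `Γ`-stable subgroup has all its values
there. -/
lemma crossedHom_mem_of_closure {R Γ M : Type} [CommRing R] [Group Γ] [AddCommGroup M]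
    [Module R M] (ρ : Representation R Γ M) (P : AddSubgroup M)
    (hP : ∀ g, ∀ x ∈ P, ρ g x ∈ P) {S : Set Γ} (hS : Subgroup.closure S = ⊤)
    {f : Γ → M} (hf : f ∈ crossedHoms ρ) (hfS : ∀ s ∈ S, f s ∈ P) (g : Γ) : f g ∈ P := by
  have hf : ∀ g h, f (g * h) = ρ g (f h) + f g := hf
  have h1 : f 1 = 0 := by simpa using hf 1 1
  have hg : g ∈ Subgroup.closure S := hS ▸ Subgroup.mem_top g
  induction hg using Subgroup.closure_induction with
  | mem x hx => exact hfS x hx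
  | one => rw [h1]; exact P.zero_mem
  | mul x y _ _ hx hy => rw [hf]; exact P.add_mem (hP _ _ hy) hx
  | inv x _ hx =>
    have h := hf x⁻¹ x
    rw [inv_mul_cancel, h1] at h
    rw [← neg_eq_of_add_eq_zero_right h.symm]
    exact P.neg_mem (hP _ _ hx)

/-- Restriction of 1-cocycles to a subset of the group. -/
def crossedHomsRestrict {R Γ M : Type} [CommRing R] [Group Γ] [AddCommGroup M] [Module R M]
    (ρ : Representation R Γ M) (S : Set Γ) : crossedHoms ρ →ₗ[R] (S → M) :=
  (LinearMap.funLeft R M ((↑) : S → Γ)).comp (crossedHoms ρ).subtype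

lemma crossedHomsRestrict_injective {R Γ M : Type} [CommRing R] [Group Γ] [AddCommGroup M]
    [Module R M] (ρ : Representation R Γ M) {S : Set Γ} (hS : Subgroup.closure S = ⊤) :
    Function.Injective (crossedHomsRestrict ρ S) := by
  rw [injective_iff_map_eq_zero]
  intro f hf
  ext g
  have := crossedHom_mem_of_closure ρ ⊥ (by simp) hS f.2
    (fun s hs => congrFun hf ⟨s, hs⟩) g
  simpa using this

lemma finite_crossedHoms {R Γ M : Type} [CommRing R] [IsNoetherianRing R] [Group Γ]
    [AddCommGroup M] [Module R M] [Module.Finite R M] (hΓ : Group.FG Γ)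
    (ρ : Representation R Γ M) : Module.Finite R (crossedHoms ρ) := by
  obtain ⟨S, hS⟩ := hΓ.out
  exact Module.Finite.of_injective _ (crossedHomsRestrict_injective ρ hS)

/-- `dim H¹ + dim V = dim Z¹ + dim V^Γ`, from `H¹ = Z¹ / B¹` and `B¹ ≃ V / V^Γ`. -/
lemma finrank_H1_add {k Γ V : Type} [Field k] [Group Γ] [AddCommGroup V] [Module k V]
    [Module.Finite k V] (hΓ : Group.FG Γ) (ρ : Representation k Γ V) :
    Module.finrank k (groupCohomology (Rep.of ρ) 1) + Module.finrank k V =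
      Module.finrank k (crossedHoms ρ) + Module.finrank k ρ.invariants := by
  have hZ : groupCohomology.cocycles₁ (Rep.of ρ) = crossedHoms ρ := by
    ext f
    exact groupCohomology.mem_cocycles₁_iff f
  have : Module.Finite k (groupCohomology.cocycles₁ (Rep.of ρ)) := by
    rw [hZ]; exact finite_crossedHoms hΓ ρ
  have : Module.Finite k (Rep.of ρ).V := inferInstanceAs (Module.Finite k V)
  have h1 := LinearMap.finrank_range_add_finrank_ker (groupCohomology.d₀₁ (Rep.of ρ)).hom
  rw [groupCohomology.d₀₁_ker_eq_invariants] at h1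
  have h2 := LinearMap.finrank_range_add_finrank_ker (groupCohomology.H1π (Rep.of ρ)).hom
  have hsurj : LinearMap.range (groupCohomology.H1π (Rep.of ρ)).hom = ⊤ :=
    LinearMap.range_eq_top.2 ((ModuleCat.epi_iff_surjective _).1 inferInstance)
  rw [hsurj, finrank_top] at h2
  have hker : LinearMap.ker (groupCohomology.H1π (Rep.of ρ)).hom =
      (groupCohomology.coboundaries₁ (Rep.of ρ)).comap
        (groupCohomology.cocycles₁ (Rep.of ρ)).subtype := by
    ext x
    exact groupCohomology.H1π_eq_zero_iff x
  rw [hker, (Submodule.comapSubtypeEquivOfLe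
    (groupCohomology.coboundaries₁_le_cocycles₁ (Rep.of ρ))).finrank_eq, hZ] at h2
  have h1' : Module.finrank k (groupCohomology.coboundaries₁ (Rep.of ρ)) +
    Module.finrank k ρ.invariants = Module.finrank k V := h1
  have h2' : Module.finrank k (groupCohomology (Rep.of ρ) 1) +
    Module.finrank k (groupCohomology.coboundaries₁ (Rep.of ρ)) =
      Module.finrank k (crossedHoms ρ) := h2
  omega

/-- A lattice `N` which generates the `K`-space `W` up to denominators, and whose reduction
`N / ϖN` embeds in the `k`-space `U`, forces `dim W ≤ rank N ≤ dim U`. -/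
lemma finrank_le_of_lattice {R K k N W U : Type} [CommRing R] [IsDomain R] [Field K] [Field k]
    [Algebra R K] [IsFractionRing R K] [Algebra R k] [AddCommGroup N] [Module R N]
    [Module.Free R N] [Module.Finite R N] [AddCommGroup W] [Module K W] [AddCommGroup U]
    [Module k U] [Module.Finite k U] {ϖ : R}
    (hk : Function.Surjective (algebraMap R k)) (hϖ : algebraMap R k ϖ = 0)
    (φ : N →ₛₗ[algebraMap R K] W)
    (hφ : ∀ w, ∃ a : R, a ≠ 0 ∧ ∃ n, φ n = algebraMap R K a • w)
    (ψ : N →ₛₗ[algebraMap R k] U) (hψ : ∀ n, ψ n = 0 → ∃ m, n = ϖ • m) :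
    Module.finrank K W ≤ Module.finrank k U := by
  let b := Module.Free.chooseBasis R N
  refine le_trans (b := Module.finrank R N) ?_ ?_
  · have hspan : (⊤ : Submodule K W) ≤ Submodule.span K (Set.range (φ ∘ b)) := by
      intro w _
      obtain ⟨a, ha, n, hn⟩ := hφ w
      have ha' : algebraMap R K a ≠ 0 := by
        simpa using ha
      have : φ n ∈ Submodule.span K (Set.range (φ ∘ b)) := by
        rw [← b.sum_repr n, map_sum]
        refine Submodule.sum_mem _ fun i _ => ?_
        rw [map_smulₛₗ]
        exact Submodule.smul_mem _ _ (Submodule.subset_span ⟨i, rfl⟩)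
      rw [hn] at this
      exact (Submodule.smul_mem_iff _ ha').1 this
    have h := finrank_range_le_card (R := K) (φ ∘ b)
    rw [Set.finrank, top_le_iff.1 hspan, finrank_top] at h
    rwa [Module.finrank_eq_card_basis b]
  · have hli : LinearIndependent k (ψ ∘ b) := by
      rw [Fintype.linearIndependent_iff]
      intro g hg i
      choose c hc using fun i => hk (g i)
      obtain ⟨m, hm⟩ := hψ (∑ i, c i • b i) (by
        rw [map_sum, ← hg]
        exact Finset.sum_congr rfl fun i _ => by rw [map_smulₛₗ, hc]; rfl)
      have := congrArg (fun x => b.repr x i) hm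
      simp only [b.repr_sum_self, map_smul, Finsupp.smul_apply, smul_eq_mul] at this
      rw [← hc, this, map_mul, hϖ, zero_mul]
    rw [Module.finrank_eq_card_basis b]
    exact hli.fintype_card_le_finrank

section BaseChange

variable {R A Γ L : Type} [CommRing R] [CommRing A] [Algebra R A] [Group Γ]
  [AddCommGroup L] [Module R L]

/-- The map `x ↦ 1 ⊗ x` from `L` to `A ⊗ L`, semilinear along `R → A`. -/
noncomputable def oneTmul (R A L : Type) [CommRing R] [CommRing A] [Algebra R A]
    [AddCommGroup L] [Module R L] : L →ₛₗ[algebraMap R A] A ⊗[R] L where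
  toFun x := 1 ⊗ₜ x
  map_add' := TensorProduct.tmul_add 1
  map_smul' r x := by
    rw [TensorProduct.tmul_smul, ← algebraMap_smul A]

lemma repBaseChange_oneTmul (ρ : Representation R Γ L) (g : Γ) (x : L) :
    repBaseChange (A := A) ρ g (oneTmul R A L x) = oneTmul R A L (ρ g x) := by
  exact LinearMap.baseChange_tmul (f := ρ g) (1 : A) x

lemma oneTmul_repr {ι : Type} (b : Module.Basis ι R L) (x : L) (i : ι) :
    (b.baseChange A).repr (oneTmul R A L x) i = algebraMap R A (b.repr x i) := by
  simp [oneTmul, Module.Basis.baseChange_repr_tmul, Algebra.smul_def]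

lemma oneTmul_injective [Module.Free R L] (h : Function.Injective (algebraMap R A)) :
    Function.Injective (oneTmul R A L) := by
  intro x y hxy
  let b := Module.Free.chooseBasis R L
  refine b.repr.injective (Finsupp.ext fun i => h ?_)
  rw [← oneTmul_repr, ← oneTmul_repr, hxy]

/-- The kernel of the reduction `L → A ⊗ L` is `ϖL` when the kernel of `R → A` is `(ϖ)`. -/
lemma exists_eq_smul_of_oneTmul_eq_zero [Module.Free R L] [Module.Finite R L] {ϖ : R}
    (h : ∀ r, algebraMap R A r = 0 → ϖ ∣ r) {x : L} (hx : oneTmul R A L x = 0) :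
    ∃ y, x = ϖ • y := by
  let b := Module.Free.chooseBasis R L
  have hd : ∀ i, ϖ ∣ b.repr x i := fun i => h _ (by rw [← oneTmul_repr, hx]; simp)
  choose c hc using hd
  refine ⟨∑ i, c i • b i, ?_⟩
  conv_lhs => rw [← b.sum_repr x]
  simp only [hc, Finset.smul_sum, mul_smul]

/-- Finitely many vectors of `K ⊗ L` have a common denominator with respect to `L`. -/
lemma exists_common_denominator {K : Type} [IsDomain R] [Field K] [Algebra R K]
    [IsFractionRing R K] [Module.Free R L] [Module.Finite R L] {σ : Type} [Finite σ]
    (v : σ → K ⊗[R] L) :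
    ∃ a : R, a ≠ 0 ∧ ∀ s, ∃ x, oneTmul R K L x = algebraMap R K a • v s := by
  let b := Module.Free.chooseBasis R L
  obtain ⟨a, ha⟩ := IsLocalization.exist_integer_multiples_of_finite (nonZeroDivisors R)
    (fun j : σ × Module.Free.ChooseBasisIndex R L => (b.baseChange K).repr (v j.1) j.2)
  refine ⟨a, nonZeroDivisors.ne_zero a.2, fun s => ?_⟩
  choose c hc using fun i => ha (s, i)
  refine ⟨∑ i, c i • b i, (b.baseChange K).repr.injective (Finsupp.ext fun i => ?_)⟩
  rw [oneTmul_repr, b.repr_sum_self, hc, map_smul, Finsupp.smul_apply, Algebra.smul_def,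
    smul_eq_mul]

/-- The map `Z¹(Γ, L) → Z¹(Γ, A ⊗ L)`. -/
noncomputable def crossedHomsBaseChange (A : Type) [CommRing A] [Algebra R A]
    (ρ : Representation R Γ L) :
    crossedHoms ρ →ₛₗ[algebraMap R A] crossedHoms (repBaseChange (A := A) ρ) where
  toFun f := ⟨fun g => oneTmul R A L (f.1 g), fun g h => by
    rw [repBaseChange_oneTmul, ← map_add, ← f.2 g h]⟩
  map_add' f f' := by ext g; exact map_add _ _ _
  map_smul' r f := by ext g; exact map_smulₛₗ (oneTmul R A L) r (f.1 g)

/-- The map `L^Γ → (A ⊗ L)^Γ`. -/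
noncomputable def invariantsBaseChange (A : Type) [CommRing A] [Algebra R A]
    (ρ : Representation R Γ L) :
    ρ.invariants →ₛₗ[algebraMap R A] (repBaseChange (A := A) ρ).invariants where
  toFun x := ⟨oneTmul R A L x.1, fun g => by rw [repBaseChange_oneTmul, x.2 g]⟩
  map_add' x y := Subtype.ext (map_add _ _ _)
  map_smul' r x := Subtype.ext (map_smulₛₗ (oneTmul R A L) r x.1)

end BaseChange

section Reduction

variable {R K k Γ L : Type} [CommRing R] [IsDomain R] [IsPrincipalIdealRing R] [Field K]
  [Field k] [Algebra R K] [IsFractionRing R K] [Algebra R k] [Group Γ] [AddCommGroup L]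
  [Module R L] [Module.Free R L] [Module.Finite R L]

lemma finrank_crossedHoms_le (hΓ : Group.FG Γ) {ϖ : R} (hϖ0 : ϖ ≠ 0)
    (hk : Function.Surjective (algebraMap R k)) (hϖ : ∀ r, algebraMap R k r = 0 ↔ ϖ ∣ r)
    (ρ : Representation R Γ L) :
    Module.finrank K (crossedHoms (repBaseChange (A := K) ρ)) ≤
      Module.finrank k (crossedHoms (repBaseChange (A := k) ρ)) := by
  have := finite_crossedHoms hΓ ρ
  have := finite_crossedHoms hΓ (repBaseChange (A := k) ρ)
  obtain ⟨S, hS⟩ := hΓ.out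
  have : Module.IsTorsionFree R L := inferInstance
  have : Module.Free R (crossedHoms ρ) := Module.free_of_finite_type_torsion_free'
  refine finrank_le_of_lattice (W := crossedHoms (repBaseChange (A := K) ρ))
    (U := crossedHoms (repBaseChange (A := k) ρ)) hk ((hϖ ϖ).2 dvd_rfl)
    (crossedHomsBaseChange K ρ) ?_
    (crossedHomsBaseChange k ρ) ?_
  · intro w
    have hinj := oneTmul_injective (L := L) (IsFractionRing.injective R K)
    obtain ⟨a, ha, hx⟩ := exists_common_denominator (fun s : (S : Set Γ) => w.1 s)
    have hw : algebraMap R K a • w.1 ∈ crossedHoms (repBaseChange (A := K) ρ) :=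
      Submodule.smul_mem _ _ w.2
    -- The image of `L` is `Γ`-stable, so integrality on generators gives integrality everywhere.
    have hmem := crossedHom_mem_of_closure (repBaseChange (A := K) ρ)
      (oneTmul R K L).toAddMonoidHom.range
      (by rintro g _ ⟨x, rfl⟩; exact ⟨ρ g x, (repBaseChange_oneTmul ρ g x).symm⟩) hS hw
      (fun s hs => hx ⟨s, hs⟩)
    choose n hn using hmem
    have hn : ∀ g, oneTmul R K L (n g) = (algebraMap R K a • w.1) g := hn
    refine ⟨a, ha, ⟨n, fun g h => hinj ?_⟩, Subtype.ext (funext hn)⟩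
    rw [map_add, ← repBaseChange_oneTmul, hn, hn, hn]
    exact hw g h
  · intro f hf
    choose m hm using fun g => exists_eq_smul_of_oneTmul_eq_zero (fun r => (hϖ r).1)
      (congrFun (congrArg Subtype.val hf) g : oneTmul R k L (f.1 g) = 0)
    refine ⟨⟨m, fun g h => smul_right_injective L hϖ0 ?_⟩, Subtype.ext (funext hm)⟩
    change ϖ • m (g * h) = ϖ • (ρ g (m h) + m g)
    rw [smul_add, ← map_smul, ← hm, ← hm, ← hm]
    exact f.2 g h

lemma finrank_invariants_le {ϖ : R} (hϖ0 : ϖ ≠ 0)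
    (hk : Function.Surjective (algebraMap R k)) (hϖ : ∀ r, algebraMap R k r = 0 ↔ ϖ ∣ r)
    (ρ : Representation R Γ L) :
    Module.finrank K (repBaseChange (A := K) ρ).invariants ≤
      Module.finrank k (repBaseChange (A := k) ρ).invariants := by
  refine finrank_le_of_lattice (W := (repBaseChange (A := K) ρ).invariants)
    (U := (repBaseChange (A := k) ρ).invariants) hk ((hϖ ϖ).2 dvd_rfl)
    (invariantsBaseChange K ρ) ?_
    (invariantsBaseChange k ρ) ?_
  · intro w
    have hinj := oneTmul_injective (L := L) (IsFractionRing.injective R K)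
    obtain ⟨a, ha, hx⟩ := exists_common_denominator (fun _ : Unit => w.1)
    obtain ⟨n, hn⟩ := hx ()
    refine ⟨a, ha, ⟨n, fun g => hinj ?_⟩, Subtype.ext hn⟩
    rw [← repBaseChange_oneTmul, hn, map_smul, w.2 g]
  · intro x hx
    obtain ⟨m, hm⟩ := exists_eq_smul_of_oneTmul_eq_zero (fun r => (hϖ r).1)
      (congrArg Subtype.val hx : oneTmul R k L x.1 = 0)
    refine ⟨⟨m, fun g => smul_right_injective L hϖ0 ?_⟩, Subtype.ext hm⟩
    change ϖ • ρ g m = ϖ • m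
    rw [← map_smul, ← hm, x.2 g]

end Reduction

/-- Section 3.3 of the paper. For a finitely generated group `Γ` and a
finitely generated free `ℤ_p`-module `L` with a `Γ`-action,
`dim_{ℚ_p} H¹(Γ, ℚ_p ⊗ L) ≤ dim_{𝔽_p} H¹(Γ, L/pL)`, where `L/pL` is realised as
`𝔽_p ⊗_{ℤ_p} L`. -/
theorem stmt7 (p : ℕ) [Fact p.Prime] (Γ : Type) [Group Γ] (hΓ : Group.FG Γ)
    (L : Type) [AddCommGroup L] [Module ℤ_[p] L]
    [Module.Finite ℤ_[p] L] [Module.Free ℤ_[p] L]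
    (ρ : Representation ℤ_[p] Γ L) :
    Module.finrank ℚ_[p]
        (groupCohomology (Rep.of (repBaseChange (A := ℚ_[p]) ρ)) 1) ≤
      Module.finrank (ZMod p)
        (groupCohomology (Rep.of (repBaseChange (A := ZMod p) ρ)) 1) := by
  have hk : Function.Surjective (algebraMap ℤ_[p] (ZMod p)) := ZMod.ringHom_surjective _
  have hp : ∀ r : ℤ_[p], algebraMap ℤ_[p] (ZMod p) r = 0 ↔ (p : ℤ_[p]) ∣ r := by
    intro r
    change PadicInt.toZMod r = 0 ↔ _
    rw [← RingHom.mem_ker, PadicInt.ker_toZMod, PadicInt.maximalIdeal_eq_span_p,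
      Ideal.mem_span_singleton]
  have hp0 : (p : ℤ_[p]) ≠ 0 := by
    exact_mod_cast (Fact.out : p.Prime).ne_zero
  have hZ := finrank_crossedHoms_le (K := ℚ_[p]) hΓ hp0 hk hp ρ
  have hI := finrank_invariants_le (K := ℚ_[p]) hp0 hk hp ρ
  have hQ := finrank_H1_add hΓ (repBaseChange (A := ℚ_[p]) ρ)
  have hF := finrank_H1_add hΓ (repBaseChange (A := ZMod p) ρ)
  rw [Module.finrank_baseChange] at hQ hF
  omega
end
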